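/- Let L ≥ 2 and θ ∈ ℝ. The perturbation operator H_pert(θ) = U_KT H_BLBQ(θ) U_KT − H_BLBQ(θ) satisfies the exact identity H_pert(θ) = −cosθ Σ_{j=1}^{L−1}(σˣ_jσˣ_{j+1} + σʸ_jσʸ_{j+1}) − 2cosθ Σ_{j=1}^{L−1}( |↑h⟩⟨h↑| + |↓h⟩⟨h↓| + |h↑⟩⟨↑h| + |h↓⟩⟨↓h| )_{j,j+1} − 2(cosθ−sinθ) Σ_{j=1}^{L−1}( |↑↑⟩⟨hh| + |↓↓⟩⟨hh| + |hh⟩⟨↑↑| + |hh⟩⟨↓↓| )_{j,j+1}, where ( · )_{j,j+1} denotes the indicated two-site operator acting on sites j and j+1 and identity elsewhere. -/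

import Mathlib

noncomputable section
open Complex Matrix

/-- The Hilbert space operators of the `L`-site spin-1 chain: matrices on `(ℂ³)^{⊗L}`,
with the tensor factors indexed by sites and the single-site ordered basis `(|+⟩,|0⟩,|−⟩)`. -/
abbrev Op (L : ℕ) : Type := Matrix (Fin L → Fin 3) (Fin L → Fin 3) ℂ

/-- The spin-1 matrix `Sˣ`. -/
def Sx : Matrix (Fin 3) (Fin 3) ℂ :=
  ((Real.sqrt 2 : ℝ) : ℂ)⁻¹ • !![0, 1, 0; 1, 0, 1; 0, 1, 0]

/-- The spin-1 matrix `Sʸ`. -/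
def Sy : Matrix (Fin 3) (Fin 3) ℂ :=
  ((Real.sqrt 2 : ℝ) : ℂ)⁻¹ • !![0, -I, 0; I, 0, -I; 0, I, 0]

/-- The spin-1 matrix `Sᶻ = diag(1,0,−1)`. -/
def Sz : Matrix (Fin 3) (Fin 3) ℂ := !![1, 0, 0; 0, 0, 0; 0, 0, -1]

/-- `site A j` is the one-site operator `A` acting on site `j` and identity elsewhere. -/
def site {L : ℕ} (A : Matrix (Fin 3) (Fin 3) ℂ) (j : Fin L) : Op L :=
  Matrix.of fun f g => ∏ k : Fin L, if k = j then A (f k) (g k) else (if f k = g k then 1 else 0)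

/-- One factor `exp(iπ Sᶻ_u Sˣ_v)` of the Kennedy–Tasaki transformation. -/
def ktFactor {L : ℕ} (u v : Fin L) : Op L :=
  NormedSpace.exp (((Real.pi : ℂ) * I) • (site Sz u * site Sx v))

/-- The Kennedy–Tasaki transformation `U_KT = ∏_{1 ≤ u < v ≤ L} exp(iπ Sᶻ_u Sˣ_v)`
(the factors pairwise commute, so the ordering is immaterial). -/
def UKT (L : ℕ) : Op L :=
  ((List.finRange L).map fun u =>
    ((List.finRange L).map fun v => if u < v then ktFactor u v else 1).prod).prod

/-- The p-wave basis vector `|↑⟩ = (|+⟩ − |−⟩)/√2`. -/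
def up : Fin 3 → ℂ := ![((Real.sqrt 2 : ℝ) : ℂ)⁻¹, 0, -((Real.sqrt 2 : ℝ) : ℂ)⁻¹]

/-- The p-wave basis vector `|↓⟩ = |0⟩`. -/
def down : Fin 3 → ℂ := ![0, 1, 0]

/-- The p-wave basis vector `|h⟩ = (|+⟩ + |−⟩)/√2`. -/
def hole : Fin 3 → ℂ := ![((Real.sqrt 2 : ℝ) : ℂ)⁻¹, 0, ((Real.sqrt 2 : ℝ) : ℂ)⁻¹]

/-- The rank-one operator `|a⟩⟨b|`. -/
def ketbra (a b : Fin 3 → ℂ) : Matrix (Fin 3) (Fin 3) ℂ := Matrix.vecMulVec a (star b)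

/-- `σˣ = |↑⟩⟨↓| + |↓⟩⟨↑|` (annihilating `|h⟩`). -/
def sigx : Matrix (Fin 3) (Fin 3) ℂ := ketbra up down + ketbra down up

/-- `σʸ = −i|↑⟩⟨↓| + i|↓⟩⟨↑|` (annihilating `|h⟩`). -/
def sigy : Matrix (Fin 3) (Fin 3) ℂ := (-I) • ketbra up down + I • ketbra down up

/-- `σᶻ = |↑⟩⟨↑| − |↓⟩⟨↓|` (annihilating `|h⟩`). -/
def sigz : Matrix (Fin 3) (Fin 3) ℂ := ketbra up up - ketbra down down

/-- `n = |↑⟩⟨↑| + |↓⟩⟨↓|` (annihilating `|h⟩`). -/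
def nMat : Matrix (Fin 3) (Fin 3) ℂ := ketbra up up + ketbra down down

/-- `h = |h⟩⟨h|`. -/
def hMat : Matrix (Fin 3) (Fin 3) ℂ := ketbra hole hole

/-- `P = ⊗_{j=1}^L n_j`, the orthogonal projection onto the hole-free subspace. -/
def Pproj (L : ℕ) : Op L := Matrix.of fun f g => ∏ k : Fin L, nMat (f k) (g k)

/-- The Heisenberg coupling `S_j · S_k`. -/
def heis {L : ℕ} (j k : Fin L) : Op L :=
  site Sx j * site Sx k + site Sy j * site Sy k + site Sz j * site Sz k

/-- The bilinear-biquadratic Hamiltonian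
`H_BLBQ(θ) = Σ_{j=1}^{L−1} [cosθ (S_j·S_{j+1}) + sinθ (S_j·S_{j+1})²]`. -/
def HBLBQ (L : ℕ) (θ : ℝ) : Op L :=
  ∑ j : Fin L, if h : (j : ℕ) + 1 < L then
    ((Real.cos θ : ℝ) : ℂ) • heis j ⟨(j : ℕ) + 1, h⟩
      + ((Real.sin θ : ℝ) : ℂ) • (heis j ⟨(j : ℕ) + 1, h⟩) ^ 2
  else 0

/-- The self-dual Hamiltonian `H_SD(θ) = H_BLBQ(θ) + U_KT H_BLBQ(θ) U_KT`. -/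
def HSD (L : ℕ) (θ : ℝ) : Op L := HBLBQ L θ + UKT L * HBLBQ L θ * UKT L

/-- The spin-1/2 XXZ Hamiltonian written in the p-wave basis:
`H_XXZ(θ) = (cosθ−sinθ) Σ_j (−σˣ_jσˣ_{j+1} + σʸ_jσʸ_{j+1}) + sinθ Σ_j σᶻ_jσᶻ_{j+1}`. -/
def HXXZ (L : ℕ) (θ : ℝ) : Op L :=
  ((Real.cos θ - Real.sin θ : ℝ) : ℂ) •
    (∑ j : Fin L, if h : (j : ℕ) + 1 < L then
      -(site sigx j * site sigx ⟨(j : ℕ) + 1, h⟩) + site sigy j * site sigy ⟨(j : ℕ) + 1, h⟩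
    else 0)
  + ((Real.sin θ : ℝ) : ℂ) •
    (∑ j : Fin L, if h : (j : ℕ) + 1 < L then
      site sigz j * site sigz ⟨(j : ℕ) + 1, h⟩
    else 0)

/-- The global product `∏_{j=1}^L exp(c • A_j)` of commuting single-site exponentials. -/
def globalProd (L : ℕ) (A : Matrix (Fin 3) (Fin 3) ℂ) (c : ℂ) : Op L :=
  ((List.finRange L).map fun j => NormedSpace.exp (c • site A j)).prod

/-- The symmetry flux `F^y_j = exp(−iπ Σ_{k<j} Sʸ_k) · Sʸ_j`. -/
def fluxY (L : ℕ) (j : Fin L) : Op L :=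
  NormedSpace.exp ((-((Real.pi : ℂ) * I)) •
    ∑ k : Fin L, if (k : ℕ) < (j : ℕ) then site Sy k else 0) * site Sy j


open scoped Matrix.Norms.Operator in
lemma exp_idem {n : Type*} [Fintype n] [DecidableEq n] (P : Matrix n n ℂ) (hP : P * P = P) (c : ℂ) :
    NormedSpace.exp (c • P) = 1 + (Complex.exp c - 1) • P := by
  have h1 := NormedSpace.exp_series_hasSum_exp' (𝕂 := ℂ) (c • P)
  have h2 := NormedSpace.exp_series_hasSum_exp' (𝕂 := ℂ) c
  rw [← Complex.exp_eq_exp_ℂ] at h2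
  have h3 := h2.smul_const P
  have h4 : HasSum (fun k : ℕ => if k = 0 then (1 - P) else 0) (1 - P) := hasSum_ite_eq 0 _
  have h5 := h3.add h4
  have hp : ∀ k : ℕ, P ^ (k+1) = P := by
    intro k
    induction k with
    | zero => simp
    | succ k ih => rw [pow_succ, ih, hP]
  have h6 : (fun k : ℕ => ((k.factorial : ℂ)⁻¹) • (c • P) ^ k) =
      fun k : ℕ => ((k.factorial : ℂ)⁻¹ • c ^ k) • P + (if k = 0 then (1 - P) else 0) := by
    funext k
    cases k with
    | zero => simp
    | succ k => simp [smul_pow, hp, smul_smul]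
  rw [h6] at h1
  refine (h1.unique h5).trans ?_
  rw [sub_smul, one_smul]
  abel

lemma exp_cube {n : Type*} [Fintype n] [DecidableEq n] (A : Matrix n n ℂ) (hA : A * A * A = A) :
    NormedSpace.exp (((Real.pi : ℂ) * I) • A) = 1 - (2 : ℂ) • (A * A) := by
  have h4 : A * A * A * A = A * A := by rw [hA]
  have h4' : A * (A * (A * A)) = A * A := by simpa only [mul_assoc] using h4
  have h3' : A * (A * A) = A := by simpa only [mul_assoc] using hA
  set P := (2⁻¹ : ℂ) • (A * A + A) with hPd
  set Q := (2⁻¹ : ℂ) • (A * A - A) with hQd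
  have hP : P * P = P := by
    simp only [hPd, smul_mul_smul_comm, mul_add, add_mul, mul_assoc, h3', h4']
    module
  have hQ : Q * Q = Q := by
    simp only [hQd, smul_mul_smul_comm, mul_sub, sub_mul, mul_assoc, h3', h4']
    module
  have hPQ : P * Q = 0 := by
    simp only [hPd, hQd, smul_mul_smul_comm, mul_sub, add_mul, mul_assoc, h3', h4']
    module
  have hQP : Q * P = 0 := by
    simp only [hPd, hQd, smul_mul_smul_comm, mul_add, sub_mul, mul_assoc, h3', h4']
    module
  have hs : ((Real.pi : ℂ) * I) • A = ((Real.pi : ℂ) * I) • P + (-((Real.pi : ℂ) * I)) • Q := by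
    simp only [hPd, hQd]; module
  have hc : Commute (((Real.pi : ℂ) * I) • P) ((-((Real.pi : ℂ) * I)) • Q) := by
    apply Commute.smul_left; apply Commute.smul_right
    rw [Commute, SemiconjBy, hPQ, hQP]
  rw [hs, Matrix.exp_add_of_commute _ _ hc, exp_idem P hP, exp_idem Q hQ, Complex.exp_neg,
    Complex.exp_pi_mul_I]
  have : (1 + ((-1:ℂ) - 1) • P) * (1 + ((-1:ℂ)⁻¹ - 1) • Q) = 1 + (-2:ℂ) • P + (-2:ℂ) • Q := by
    rw [add_mul, mul_add, mul_add, smul_mul_smul_comm, hPQ]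
    norm_num
    abel
  rw [this]
  simp only [hPd, hQd]; module

def tens {L : ℕ} (A : Fin L → Matrix (Fin 3) (Fin 3) ℂ) : Op L :=
  Matrix.of fun f g => ∏ k : Fin L, A k (f k) (g k)

lemma tens_mul {L : ℕ} (A B : Fin L → Matrix (Fin 3) (Fin 3) ℂ) :
    tens A * tens B = tens (A * B) := by
  ext f g
  simp only [tens, Matrix.mul_apply, Matrix.of_apply, Pi.mul_apply]
  rw [Finset.prod_univ_sum]
  simp [Finset.prod_mul_distrib]

lemma tens_one {L : ℕ} : tens (1 : Fin L → Matrix (Fin 3) (Fin 3) ℂ) = 1 := by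
  ext f g
  simp only [tens, Matrix.of_apply, Pi.one_apply, Matrix.one_apply]
  rw [Fintype.prod_ite_zero]
  simp [funext_iff]

lemma site_eq {L : ℕ} (A : Matrix (Fin 3) (Fin 3) ℂ) (j : Fin L) :
    site A j = tens (Pi.mulSingle j A) := by
  ext f g
  simp only [site, tens, Matrix.of_apply]
  refine Finset.prod_congr rfl fun k _ => ?_
  by_cases h : k = j
  · subst h; simp
  · simp [h, Matrix.one_apply]

def tw {L : ℕ} (i j : Fin L) (A B : Matrix (Fin 3) (Fin 3) ℂ) : Op L := site A i * site B j

lemma tw_mul {L : ℕ} {i j : Fin L} (h : i ≠ j) (A B C D : Matrix (Fin 3) (Fin 3) ℂ) :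
    tw i j A B * tw i j C D = tw i j (A * C) (B * D) := by
  simp only [tw, site_eq, tens_mul]
  congr 1
  rw [Pi.mulSingle_mul, Pi.mulSingle_mul]
  exact Commute.mul_mul_mul_comm
    (Pi.mulSingle_commute (f := fun _ : Fin L => Matrix (Fin 3) (Fin 3) ℂ) h C B).symm _ _

lemma tw_apply {L : ℕ} {i j : Fin L} (h : i ≠ j) (A B : Matrix (Fin 3) (Fin 3) ℂ)
    (f g : Fin L → Fin 3) :
    tw i j A B f g = if ∀ k, k ≠ i → k ≠ j → f k = g k then A (f i) (g i) * B (f j) (g j) else 0 := by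
  simp only [tw, site_eq, tens_mul]
  simp only [tens, Matrix.of_apply, Pi.mul_apply]
  split_ifs with hh
  · rw [Fintype.prod_eq_mul i j h]
    · simp [h, h.symm]
    · rintro k ⟨h1, h2⟩
      simp [h1, h2, hh k h1 h2]
  · push Not at hh
    obtain ⟨k, h1, h2, h3⟩ := hh
    apply Finset.prod_eq_zero (Finset.mem_univ k)
    simp [h1, h2, h3]

def Wm : Matrix (Fin 3) (Fin 3) ℂ := Matrix.of fun i j => ![up i, down i, hole i] j

lemma s2 : ((Real.sqrt 2 : ℝ) : ℂ)⁻¹ * ((Real.sqrt 2 : ℝ) : ℂ)⁻¹ = 2⁻¹ := by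
  rw [← mul_inv, ← Complex.ofReal_mul, Real.mul_self_sqrt (by norm_num)]; simp

lemma W1 : Wmᵀ * Wm = 1 := by
  ext i j
  fin_cases i <;> fin_cases j <;>
    simp [Wm, Matrix.mul_apply, Fin.sum_univ_three, up, down, hole, s2] <;> norm_num

lemma W2 : Wm * Wmᵀ = 1 := mul_eq_one_comm.mp W1

lemma Wx : Wmᵀ * Sx * Wm = !![0,0,0;0,0,1;0,1,0] := by
  ext i j
  fin_cases i <;> fin_cases j <;>
    simp [Wm, Matrix.mul_apply, Fin.sum_univ_three, up, down, hole, Sx, s2] <;> norm_num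
lemma Wy : Wmᵀ * Sy * Wm = !![0,-I,0;I,0,0;0,0,0] := by
  ext i j
  fin_cases i <;> fin_cases j <;>
    simp [Wm, Matrix.mul_apply, Fin.sum_univ_three, up, down, hole, Sy] <;> ring_nf <;> simp only [inv_pow, pow_two, mul_inv, s2] <;> ring
lemma Wz : Wmᵀ * Sz * Wm = !![0,0,1;0,0,0;1,0,0] := by
  ext i j
  fin_cases i <;> fin_cases j <;>
    simp [Wm, Matrix.mul_apply, Fin.sum_univ_three, up, down, hole, Sz, s2] <;> norm_num

lemma Wket (a b : Fin 3 → ℂ) : Wmᵀ * ketbra a b * Wm =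
    vecMulVec (Wmᵀ *ᵥ a) (star b ᵥ* Wm) := by
  rw [ketbra, Matrix.mul_vecMulVec, Matrix.vecMulVec_mul]

lemma Wup : Wmᵀ *ᵥ up = ![1,0,0] := by
  ext i
  fin_cases i <;> simp [Wm, Matrix.mulVec, dotProduct, Fin.sum_univ_three, up, down, hole, s2] <;> norm_num
lemma Wdown : Wmᵀ *ᵥ down = ![0,1,0] := by
  ext i
  fin_cases i <;> simp [Wm, Matrix.mulVec, dotProduct, Fin.sum_univ_three, up, down, hole, s2]
lemma Whole : Wmᵀ *ᵥ hole = ![0,0,1] := by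
  ext i
  fin_cases i <;> simp [Wm, Matrix.mulVec, dotProduct, Fin.sum_univ_three, up, down, hole, s2] <;> norm_num
lemma Wup' : star up ᵥ* Wm = ![1,0,0] := by
  ext i
  fin_cases i <;> simp [Wm, Matrix.vecMul, dotProduct, Fin.sum_univ_three, up, down, hole, s2] <;> norm_num
lemma Wdown' : star down ᵥ* Wm = ![0,1,0] := by
  ext i
  fin_cases i <;> simp [Wm, Matrix.vecMul, dotProduct, Fin.sum_univ_three, up, down, hole, s2]
lemma Whole' : star hole ᵥ* Wm = ![0,0,1] := by
  ext i
  fin_cases i <;> simp [Wm, Matrix.vecMul, dotProduct, Fin.sum_univ_three, up, down, hole, s2] <;> norm_num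

def Phi (L : ℕ) : Op L →ₐ[ℂ] Op L where
  toFun M := tens (fun _ => Wmᵀ) * M * tens (fun _ => Wm)
  map_one' := by
    rw [mul_one, tens_mul, ← tens_one]; congr 1; funext k; exact W1
  map_mul' x y := by
    have : tens (fun _ : Fin L => Wm) * tens (fun _ => Wmᵀ) = 1 := by
      rw [tens_mul, ← tens_one]; congr 1; funext k; exact W2
    calc _ = tens (fun _ => Wmᵀ) * x * 1 * y * tens (fun _ => Wm) := by simp only [mul_assoc, one_mul]
      _ = _ := by rw [← this]; simp only [mul_assoc]
  map_zero' := by simp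
  map_add' x y := by simp [mul_add, add_mul]
  commutes' r := by
    rw [Algebra.algebraMap_eq_smul_one, mul_smul_comm, smul_mul_assoc, mul_one, tens_mul,
      ← tens_one]; congr 2; funext k; exact W1

lemma Phi_inj (L : ℕ) : Function.Injective (Phi L) := by
  intro x y h
  have : tens (fun _ : Fin L => Wm) * tens (fun _ => Wmᵀ) = 1 := by
    rw [tens_mul, ← tens_one]; congr 1; funext k; exact W2
  have h' : tens (fun _ => Wmᵀ) * x * tens (fun _ => Wm) =
    tens (fun _ => Wmᵀ) * y * tens (fun _ => Wm) := h
  have h2 := congrArg (fun M => tens (fun _ => Wm) * M * tens (fun _ => Wmᵀ)) h'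
  simp only [mul_assoc, this, mul_one] at h2
  simpa only [← mul_assoc, this, one_mul] using h2

lemma Phi_site {L : ℕ} (A : Matrix (Fin 3) (Fin 3) ℂ) (j : Fin L) :
    Phi L (site A j) = site (Wmᵀ * A * Wm) j := by
  change tens (fun _ => Wmᵀ) * site A j * tens (fun _ => Wm) = _
  rw [site_eq, site_eq, tens_mul, tens_mul]
  congr 1
  funext k
  by_cases h : k = j
  · subst h; simp
  · simp [h, W1]

lemma Phi_tw {L : ℕ} (i j : Fin L) (A B : Matrix (Fin 3) (Fin 3) ℂ) :
    Phi L (site A i * site B j) = tw i j (Wmᵀ * A * Wm) (Wmᵀ * B * Wm) := by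
  rw [map_mul, Phi_site, Phi_site, tw]

def kk (a b : Fin 3) : ℂ := if a ≠ 1 ∧ b ≠ 0 then -1 else 1

def Dfun {L : ℕ} (f : Fin L → Fin 3) : ℂ := ∏ u, ∏ v, if u < v then kk (f u) (f v) else 1

lemma kt_eq {L : ℕ} {u v : Fin L} (h : u ≠ v) :
    Phi L (ktFactor u v) = diagonal fun f => kk (f u) (f v) := by
  rw [ktFactor]
  have hz : Sz * Sz * Sz = Sz := by
    ext i j
    fin_cases i <;> fin_cases j <;> simp [Matrix.mul_apply, Fin.sum_univ_three, Sz]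
  have hx : Sx * Sx * Sx = Sx := by
    ext i j
    fin_cases i <;> fin_cases j <;> simp [Matrix.mul_apply, Fin.sum_univ_three, Sx, s2] <;> ring
  have hA : (site Sz u * site Sx v) * (site Sz u * site Sx v) * (site Sz u * site Sx v)
      = site Sz u * site Sx v := by
    have := tw_mul h
    simp only [tw] at this
    rw [this, this, hz, hx]
  rw [exp_cube _ hA, map_sub, map_smul, map_one, map_mul, Phi_tw, tw_mul h, Wx, Wz]
  ext f g
  rw [Matrix.sub_apply, Matrix.smul_apply, tw_apply h, Matrix.diagonal_apply, Matrix.one_apply]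
  by_cases hfg : f = g
  · subst hfg
    simp only [kk]
    generalize f u = a
    generalize f v = b
    fin_cases a <;> fin_cases b <;> simp [Matrix.mul_apply, Fin.sum_univ_three] <;> norm_num
  · simp only [hfg, if_false]
    split_ifs with hh
    · have : f u ≠ g u ∨ f v ≠ g v := by
        by_contra! hc
        apply hfg
        funext k
        by_cases h1 : k = u
        · rw [h1, hc.1]
        by_cases h2 : k = v
        · rw [h2, hc.2]
        exact hh k h1 h2
      generalize f u = a at *
      generalize f v = b at *
      generalize g u = c at *
      generalize g v = d at *
      rcases this with h' | h'
      · have : ((!![0,0,1;0,0,0;1,0,0] : Matrix (Fin 3) (Fin 3) ℂ) * !![0,0,1;0,0,0;1,0,0] : Matrix (Fin 3) (Fin 3) ℂ) a c = 0 := by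
          revert h'
          fin_cases a <;> fin_cases c <;> simp [Matrix.mul_apply, Fin.sum_univ_three]
        rw [this]; simp
      · have : ((!![0,0,0;0,0,1;0,1,0] : Matrix (Fin 3) (Fin 3) ℂ) * !![0,0,0;0,0,1;0,1,0] : Matrix (Fin 3) (Fin 3) ℂ) b d = 0 := by
          revert h'
          fin_cases b <;> fin_cases d <;> simp [Matrix.mul_apply, Fin.sum_univ_three]
        rw [this]; simp
    · simp

lemma list_diag {n : Type*} [Fintype n] [DecidableEq n] {ι : Type*} (l : List ι) (d : ι → n → ℂ) :
    (l.map fun i => diagonal (d i)).prod = diagonal fun x => (l.map fun i => d i x).prod := by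
  induction l with
  | nil => simp
  | cons a l ih => simp [ih, Matrix.diagonal_mul_diagonal]

lemma Phi_UKT (L : ℕ) : Phi L (UKT L) = diagonal Dfun := by
  rw [UKT, map_list_prod, List.map_map]
  have : (fun u : Fin L => Phi L (((List.finRange L).map fun v => if u < v then ktFactor u v else 1).prod))
      = fun u => diagonal fun f => ((List.finRange L).map fun v => if u < v then kk (f u) (f v) else 1).prod := by
    funext u
    rw [map_list_prod, List.map_map, ← list_diag]
    congr 2
    funext v
    simp only [Function.comp]
    split_ifs with h
    · exact kt_eq h.ne
    · simp
  change (List.map (fun u : Fin L => Phi L (((List.finRange L).map fun v => if u < v then ktFactor u v else 1).prod)) _).prod = _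
  rw [this, list_diag]
  congr 1

def sg (a : Fin 3) : ℂ := if a = 2 then -1 else 1

def hx1 (a b c d : Fin 3) : ℂ :=
  (if a = d ∧ b = c then 1 else 0) - (if a = b ∧ c = d then sg a * sg c else 0)
def hx2 (a b c d : Fin 3) : ℂ :=
  (if a = c ∧ b = d then 1 else 0) + (if a = b ∧ c = d then sg a * sg c else 0)

lemma kk_sq (a b : Fin 3) : kk a b * kk a b = 1 := by
  unfold kk; split_ifs <;> norm_num

def par (a b c d : Fin 3) : Prop := (a = d ∧ b = c) ∨ (a = b ∧ c = d) ∨ (a = c ∧ b = d)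

lemma par1 {a b c d : Fin 3} (h : par a b c d) (e : Fin 3) :
    kk e a * kk e c * (kk e b * kk e d) = 1 ∧ kk a e * kk c e * (kk b e * kk d e) = 1 := by
  rcases h with ⟨rfl, rfl⟩ | ⟨rfl, rfl⟩ | ⟨rfl, rfl⟩
  · have h1 := kk_sq e a; have h2 := kk_sq e b; have h3 := kk_sq a e; have h4 := kk_sq b e
    constructor <;> grind
  · have h1 := kk_sq e a; have h2 := kk_sq e c; have h3 := kk_sq a e; have h4 := kk_sq c e
    constructor <;> grind
  · have h1 := kk_sq e a; have h2 := kk_sq e b; have h3 := kk_sq a e; have h4 := kk_sq b e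
    constructor <;> grind

lemma DD {L : ℕ} {i j : Fin L} (hij : (j : ℕ) = i + 1) (f g : Fin L → Fin 3)
    (hfg : ∀ k, k ≠ i → k ≠ j → f k = g k) (hp : par (f i) (f j) (g i) (g j)) :
    Dfun f * Dfun g = kk (f i) (f j) * kk (g i) (g j) := by
  have hne : i ≠ j := by intro h; rw [h] at hij; omega
  have hlt : i < j := by rw [Fin.lt_def]; omega
  simp only [Dfun, ← Finset.prod_mul_distrib]
  set G : Fin L → Fin L → ℂ := fun u v =>
    (if u < v then kk (f u) (f v) else 1) * (if u < v then kk (g u) (g v) else 1) with hG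
  change ∏ u, ∏ v, G u v = _
  rw [Fintype.prod_eq_mul i j hne]
  · rw [← Finset.prod_mul_distrib, Fintype.prod_eq_single j]
    · simp [hG, hlt]
    · intro v hv
      by_cases hvi : v = i
      · subst hvi; simp [hG, hlt.not_gt]
      · have e := hfg v hvi hv
        have : (i < v ∧ j < v) ∨ (¬ i < v ∧ ¬ j < v) := by
          have h1 : (v : ℕ) ≠ i := fun h => hvi (Fin.ext h)
          have h2 : (v : ℕ) ≠ j := fun h => hv (Fin.ext h)
          simp only [Fin.lt_def]; omega
        rcases this with ⟨h1, h2⟩ | ⟨h1, h2⟩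
        · simp only [hG, h1, h2, if_true, e]
          exact (par1 hp _).2
        · simp [hG, h1, h2]
  · rintro u ⟨hui, huj⟩
    have e := hfg u hui huj
    rw [Fintype.prod_eq_mul i j hne]
    · have : (u < i ∧ u < j) ∨ (¬ u < i ∧ ¬ u < j) := by
        have h1 : (u : ℕ) ≠ i := fun h => hui (Fin.ext h)
        have h2 : (u : ℕ) ≠ j := fun h => huj (Fin.ext h)
        simp only [Fin.lt_def]; omega
      rcases this with ⟨h1, h2⟩ | ⟨h1, h2⟩
      · simp only [hG, h1, h2, if_true, e]
        exact (par1 hp _).1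
      · simp [hG, h1, h2]
    · rintro v ⟨hvi, hvj⟩
      simp only [hG, e, hfg v hvi hvj]
      split_ifs
      · exact kk_sq _ _
      · simp

abbrev Tx : Matrix (Fin 3) (Fin 3) ℂ := !![0,0,0;0,0,1;0,1,0]
abbrev Ty : Matrix (Fin 3) (Fin 3) ℂ := !![0,-I,0;I,0,0;0,0,0]
abbrev Tz : Matrix (Fin 3) (Fin 3) ℂ := !![0,0,1;0,0,0;1,0,0]

lemma Phi_heis {L : ℕ} (i j : Fin L) :
    Phi L (heis i j) = tw i j Tx Tx + tw i j Ty Ty + tw i j Tz Tz := by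
  rw [heis, map_add, map_add, Phi_tw, Phi_tw, Phi_tw, Wx, Wy, Wz]

lemma Phi_heis_apply {L : ℕ} {i j : Fin L} (h : i ≠ j) (f g : Fin L → Fin 3) :
    Phi L (heis i j) f g = if ∀ k, k ≠ i → k ≠ j → f k = g k then
      hx1 (f i) (f j) (g i) (g j) else 0 := by
  rw [Phi_heis]
  simp only [Matrix.add_apply, tw_apply h]
  split_ifs
  · generalize f i = a
    generalize f j = b
    generalize g i = c
    generalize g j = d
    fin_cases a <;> fin_cases b <;> fin_cases c <;> fin_cases d <;> simp [hx1, sg]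
  · simp

set_option maxHeartbeats 4000000 in
lemma Phi_heis2_apply {L : ℕ} {i j : Fin L} (h : i ≠ j) (f g : Fin L → Fin 3) :
    (Phi L (heis i j) ^ 2) f g = if ∀ k, k ≠ i → k ≠ j → f k = g k then
      hx2 (f i) (f j) (g i) (g j) else 0 := by
  rw [Phi_heis, pow_two]
  simp only [mul_add, add_mul, tw_mul h, Matrix.mul_fin_three, mul_zero, zero_mul, add_zero, zero_add,
    mul_one, one_mul, mul_neg, neg_mul, I_mul_I, neg_neg]
  simp only [Matrix.add_apply, tw_apply h]
  split_ifs
  · generalize f i = a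
    generalize f j = b
    generalize g i = c
    generalize g j = d
    fin_cases a <;> fin_cases b <;> fin_cases c <;> fin_cases d <;>
      simp [hx2, sg] <;> norm_num
  · simp

lemma Wsx : Wmᵀ * sigx * Wm = !![0,1,0;1,0,0;0,0,0] := by
  rw [sigx, mul_add, add_mul, Wket, Wket, Wup, Wup', Wdown, Wdown']
  ext i j
  fin_cases i <;> fin_cases j <;> simp [vecMulVec_apply]

lemma Wsy : Wmᵀ * sigy * Wm = !![0,-I,0;I,0,0;0,0,0] := by
  rw [sigy, mul_add, add_mul, mul_smul_comm, mul_smul_comm, smul_mul_assoc, smul_mul_assoc,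
    Wket, Wket, Wup, Wup', Wdown, Wdown']
  ext i j
  fin_cases i <;> fin_cases j <;> simp [vecMulVec_apply]

lemma hx_zero {a b c d : Fin 3} (h : ¬ par a b c d) : hx1 a b c d = 0 ∧ hx2 a b c d = 0 := by
  simp only [par, not_or] at h
  simp [hx1, hx2, h]

set_option maxHeartbeats 4000000 in
lemma num (a b c d : Fin 3) (C S : ℂ) :
    kk a b * kk c d * (C * hx1 a b c d + S * hx2 a b c d) - (C * hx1 a b c d + S * hx2 a b c d) =
    -C * ((!![0,1,0;1,0,0;0,0,0] : Matrix (Fin 3) (Fin 3) ℂ) a c *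
        (!![0,1,0;1,0,0;0,0,0] : Matrix (Fin 3) (Fin 3) ℂ) b d + Ty a c * Ty b d)
    - 2 * C * (![1,0,0] a * ![0,0,1] c * (![0,0,1] b * ![1,0,0] d)
      + ![0,1,0] a * ![0,0,1] c * (![0,0,1] b * ![0,1,0] d)
      + ![0,0,1] a * ![1,0,0] c * (![1,0,0] b * ![0,0,1] d)
      + ![0,0,1] a * ![0,1,0] c * (![0,1,0] b * ![0,0,1] d))
    - 2 * (C - S) * (![1,0,0] a * ![0,0,1] c * (![1,0,0] b * ![0,0,1] d)
      + ![0,1,0] a * ![0,0,1] c * (![0,1,0] b * ![0,0,1] d)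
      + ![0,0,1] a * ![1,0,0] c * (![0,0,1] b * ![1,0,0] d)
      + ![0,0,1] a * ![0,1,0] c * (![0,0,1] b * ![0,1,0] d)) := by
  fin_cases a <;> fin_cases b <;> fin_cases c <;> fin_cases d <;>
    simp [hx1, hx2, sg, kk] <;> ring

lemma key {L : ℕ} {i j : Fin L} (hij : (j : ℕ) = i + 1) (C S : ℂ) :
    UKT L * (C • heis i j + S • heis i j ^ 2) * UKT L - (C • heis i j + S • heis i j ^ 2) =
      (-C) • (site sigx i * site sigx j + site sigy i * site sigy j)
      - (2 * C) • (site (ketbra up hole) i * site (ketbra hole up) j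
              + site (ketbra down hole) i * site (ketbra hole down) j
              + site (ketbra hole up) i * site (ketbra up hole) j
              + site (ketbra hole down) i * site (ketbra down hole) j)
      - (2 * (C - S)) • (site (ketbra up hole) i * site (ketbra up hole) j
              + site (ketbra down hole) i * site (ketbra down hole) j
              + site (ketbra hole up) i * site (ketbra hole up) j
              + site (ketbra hole down) i * site (ketbra hole down) j) := by
  have hne : i ≠ j := by intro h; rw [h] at hij; omega
  apply Phi_inj
  simp only [map_sub, map_add, map_smul, Phi_tw, Wsx, Wsy, Wket, Wup, Wup', Wdown, Wdown', Whole,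
    Whole']
  rw [map_mul, map_mul, map_add, map_smul, map_smul, map_pow, Phi_UKT]
  ext f g
  simp only [Matrix.sub_apply, Matrix.mul_diagonal, Matrix.diagonal_mul, Matrix.add_apply,
    Matrix.smul_apply, Phi_heis_apply hne, Phi_heis2_apply hne, tw_apply hne, smul_eq_mul]
  by_cases hh : ∀ k, k ≠ i → k ≠ j → f k = g k
  · simp only [if_pos hh, vecMulVec_apply]
    rw [← num]
    congr 1
    by_cases hp : par (f i) (f j) (g i) (g j)
    · rw [← DD hij f g hh hp]; ring
    · simp [hx_zero hp]
  · simp only [if_neg hh]; simp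

/-- The perturbation `H_pert(θ) = U_KT H_BLBQ(θ) U_KT − H_BLBQ(θ)` satisfies the
exact identity stated in the p-wave basis (each two-site ket-bra `|ab⟩⟨cd|_{j,j+1}` factorizes
as `(|a⟩⟨c|)_j (|b⟩⟨d|)_{j+1}`). -/
theorem Hpert_exact_identity (L : ℕ) (hL : 2 ≤ L) (θ : ℝ) :
    UKT L * HBLBQ L θ * UKT L - HBLBQ L θ =
      (-((Real.cos θ : ℝ) : ℂ)) •
          (∑ j : Fin L, if h : (j : ℕ) + 1 < L then
            site sigx j * site sigx ⟨(j : ℕ) + 1, h⟩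
              + site sigy j * site sigy ⟨(j : ℕ) + 1, h⟩
          else 0)
        - (2 * ((Real.cos θ : ℝ) : ℂ)) •
          (∑ j : Fin L, if h : (j : ℕ) + 1 < L then
            site (ketbra up hole) j * site (ketbra hole up) ⟨(j : ℕ) + 1, h⟩
              + site (ketbra down hole) j * site (ketbra hole down) ⟨(j : ℕ) + 1, h⟩
              + site (ketbra hole up) j * site (ketbra up hole) ⟨(j : ℕ) + 1, h⟩
              + site (ketbra hole down) j * site (ketbra down hole) ⟨(j : ℕ) + 1, h⟩
          else 0)
        - (2 * (((Real.cos θ - Real.sin θ : ℝ)) : ℂ)) •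
          (∑ j : Fin L, if h : (j : ℕ) + 1 < L then
            site (ketbra up hole) j * site (ketbra up hole) ⟨(j : ℕ) + 1, h⟩
              + site (ketbra down hole) j * site (ketbra down hole) ⟨(j : ℕ) + 1, h⟩
              + site (ketbra hole up) j * site (ketbra hole up) ⟨(j : ℕ) + 1, h⟩
              + site (ketbra hole down) j * site (ketbra hole down) ⟨(j : ℕ) + 1, h⟩
          else 0) := by
  rw [HBLBQ, Finset.mul_sum, Finset.sum_mul, ← Finset.sum_sub_distrib, Finset.smul_sum,
    Finset.smul_sum, Finset.smul_sum, ← Finset.sum_sub_distrib, ← Finset.sum_sub_distrib]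
  refine Finset.sum_congr rfl fun j _ => ?_
  by_cases h : (j : ℕ) + 1 < L
  · simp only [dif_pos h]
    rw [key (i := j) (j := ⟨(j : ℕ) + 1, h⟩) rfl, Complex.ofReal_sub]
  · simp [dif_neg h]

end
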